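/- arXiv:1705.06894 — 12 statements merged into one kernel-verified Lean document; each statement's English description precedes it below -/
import Mathlib

section
/- For all reals t ≥ 1, ε ∈ (0,1), c > 0 and 0 < ω ≤ 1: if (1/t)·log(log((1+ε)t)/ω) ≥ c, then t ≤ (1/c)·log(2·log((1+ε)/(c·ω))/ω). -/
/-- For all reals t ≥ 1, ε ∈ (0,1), c > 0 and 0 < ω ≤ 1: if
(1/t)·log(log((1+ε)t)/ω) ≥ c, then t ≤ (1/c)·log(2·log((1+ε)/(c·ω))/ω). -/
theorem stmt_1 (t ε c ω : ℝ) (ht : 1 ≤ t) (hε0 : 0 < ε) (hε1 : ε < 1)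
    (hc : 0 < c) (hω0 : 0 < ω) (hω1 : ω ≤ 1)
    (h : (1 / t) * Real.log (Real.log ((1 + ε) * t) / ω) ≥ c) :
    t ≤ (1 / c) * Real.log (2 * Real.log ((1 + ε) / (c * ω)) / ω) := by
  have ht0 : 0 < t := by linarith
  have hat : 1 < (1 + ε) * t := by nlinarith
  have hL : 0 < Real.log ((1 + ε) * t) := Real.log_pos hat
  have h1 : c * t ≤ Real.log (Real.log ((1 + ε) * t) / ω) := by
    rw [ge_iff_le, one_div, inv_mul_eq_div, le_div_iff₀ ht0] at h
    exact h
  have h2 : Real.log ((1 + ε) * t) ≤ Real.sqrt ((1 + ε) * t) := by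
    have hy : 0 < Real.sqrt ((1 + ε) * t) := Real.sqrt_pos.2 (by linarith)
    have e1 := Real.log_le_sub_one_of_pos (half_pos hy)
    rw [Real.log_div hy.ne' (by norm_num), Real.log_sqrt (by linarith)] at e1
    have := Real.log_two_lt_d9
    linarith
  have h3 : ω * (c * t) ≤ Real.log ((1 + ε) * t) := by
    have e1 := Real.log_le_sub_one_of_pos (div_pos hL hω0)
    have e2 : c * t ≤ Real.log ((1 + ε) * t) / ω := by linarith
    rw [le_div_iff₀ hω0] at e2
    linarith
  have h4 : (ω * (c * t)) ^ 2 ≤ (1 + ε) * t := by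
    have := pow_le_pow_left₀ (by positivity) (h3.trans h2) 2
    rwa [Real.sq_sqrt (by linarith)] at this
  have h5 : (c * ω) ^ 2 * t ≤ 1 + ε := by
    refine le_of_mul_le_mul_right ?_ ht0
    linarith [h4, (by ring : (c * ω) ^ 2 * t * t = (ω * (c * t)) ^ 2)]
  have h6 : Real.log ((1 + ε) * t) ≤ 2 * Real.log ((1 + ε) / (c * ω)) := by
    have : 2 * Real.log ((1 + ε) / (c * ω)) = Real.log (((1 + ε) / (c * ω)) ^ 2) := by
      rw [Real.log_pow]; norm_num
    rw [this]
    apply Real.log_le_log (by linarith)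
    rw [div_pow, le_div_iff₀ (by positivity)]
    nlinarith
  have h7 : Real.log (Real.log ((1 + ε) * t) / ω)
      ≤ Real.log (2 * Real.log ((1 + ε) / (c * ω)) / ω) :=
    Real.log_le_log (div_pos hL hω0) (by gcongr)
  rw [one_div, inv_mul_eq_div, le_div_iff₀ hc]
  linarith
end

section
/- Suppose μ̂_h − r_h < μ̂_l + r_l (the stopping condition of lil'RandLUCB fails), and let c ∈ {h, l} be an arm with r_c = max(r_h, r_l). Then r_c ≥ Δ_c/8. -/
/-- Suppose μ̂_h − r_h < μ̂_l + r_l (the stopping condition of lil'RandLUCB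
fails), and let c ∈ {h, l} be an arm with r_c = max(r_h, r_l). Then r_c ≥ Δ_c/8. -/
theorem stmt_7 {N K : ℕ} (hK1 : 1 ≤ K) (hKN : K < N)
    (μ : Fin N → ℝ) (OPT : Finset (Fin N)) (mK mK1 : ℝ)
    (hcard : OPT.card = K)
    (horder : mK1 < mK)
    (hin : ∀ i ∈ OPT, mK ≤ μ i)
    (hout : ∀ i ∉ OPT, μ i ≤ mK1)
    (hattK : ∃ i ∈ OPT, μ i = mK)
    (hattK1 : ∃ i ∉ OPT, μ i = mK1)
    (Δ : Fin N → ℝ)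
    (hΔ : ∀ i, Δ i = if i ∈ OPT then μ i - mK1 else mK - μ i)
    (μh r : Fin N → ℝ) (hr : ∀ i, 0 < r i) (hconf : ∀ i, |μh i - μ i| < r i)
    (High : Finset (Fin N)) (hHcard : High.card = K)
    (hHigh : ∀ i ∈ High, ∀ j ∉ High, μh j ≤ μh i)
    (h l : Fin N) (hhH : h ∈ High) (hlH : l ∉ High)
    (hhmin : ∀ i ∈ High, μh h - r h ≤ μh i - r i)
    (hlmax : ∀ i ∉ High, μh i + r i ≤ μh l + r l)
    (hnstop : μh h - r h < μh l + r l)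
    (c : Fin N) (hc : c = h ∨ c = l) (hcr : r c = max (r h) (r l)) :
    r c ≥ Δ c / 8 := by
  have A : (∃ j ∈ High, j ∉ OPT) → μh h - r h < mK1 := by
    rintro ⟨j, h1, h2⟩
    have := abs_lt.1 (hconf j)
    linarith [hhmin j h1, hout j h2]
  have B : (∃ j ∈ OPT, j ∉ High) → mK < μh l + r l := by
    rintro ⟨j, h1, h2⟩
    have := abs_lt.1 (hconf j)
    linarith [hlmax j h2, hin j h1]
  have A' : l ∈ OPT → μh h - r h < mK1 := by
    intro hl
    apply A
    by_contra! hcon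
    have := Finset.eq_of_subset_of_card_le (s := High) (t := OPT) hcon (by omega)
    exact hlH (this ▸ hl)
  have B' : h ∉ OPT → mK < μh l + r l := by
    intro hh
    apply B
    by_contra! hcon
    have := Finset.eq_of_subset_of_card_le (s := OPT) (t := High) hcon (by omega)
    exact hh (this ▸ hhH)
  have hlh := hHigh h hhH l hlH
  have c1 := abs_lt.1 (hconf h)
  have c2 := abs_lt.1 (hconf l)
  have m1 : r h ≤ r c := hcr ▸ le_max_left _ _
  have m2 : r l ≤ r c := hcr ▸ le_max_right _ _
  have p1 := hr h
  have p2 := hr l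
  rw [hΔ c]
  rcases hc with rfl | rfl
  · split_ifs with hh
    · by_cases hl : l ∈ OPT
      · linarith [A' hl]
      · linarith [hout l hl]
    · linarith [B' hh]
  · split_ifs with hl
    · linarith [A' hl]
    · by_cases hh : h ∈ OPT
      · linarith [hin h hh]
      · linarith [B' hh]
end

section
/- Suppose h ∉ OPT and l ∈ OPT. Then r_h + r_l > (Δ_h + Δ_l)/2, and consequently any c ∈ {h, l} with r_c = max(r_h, r_l) satisfies r_c ≥ Δ_c/4. -/
/-- Suppose h ∉ OPT and l ∈ OPT. Then r_h + r_l > (Δ_h + Δ_l)/2, and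
consequently any c ∈ {h, l} with r_c = max(r_h, r_l) satisfies r_c ≥ Δ_c/4. -/
theorem stmt_8 {N K : ℕ} (hK1 : 1 ≤ K) (hKN : K < N)
    (μ : Fin N → ℝ) (OPT : Finset (Fin N)) (mK mK1 : ℝ)
    (hcard : OPT.card = K)
    (horder : mK1 < mK)
    (hin : ∀ i ∈ OPT, mK ≤ μ i)
    (hout : ∀ i ∉ OPT, μ i ≤ mK1)
    (hattK : ∃ i ∈ OPT, μ i = mK)
    (hattK1 : ∃ i ∉ OPT, μ i = mK1)
    (Δ : Fin N → ℝ)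
    (hΔ : ∀ i, Δ i = if i ∈ OPT then μ i - mK1 else mK - μ i)
    (μh r : Fin N → ℝ) (hr : ∀ i, 0 < r i) (hconf : ∀ i, |μh i - μ i| < r i)
    (High : Finset (Fin N)) (hHcard : High.card = K)
    (hHigh : ∀ i ∈ High, ∀ j ∉ High, μh j ≤ μh i)
    (h l : Fin N) (hhH : h ∈ High) (hlH : l ∉ High)
    (hhmin : ∀ i ∈ High, μh h - r h ≤ μh i - r i)
    (hlmax : ∀ i ∉ High, μh i + r i ≤ μh l + r l)
    (hhO : h ∉ OPT) (hlO : l ∈ OPT) :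
    r h + r l > (Δ h + Δ l) / 2 ∧
      ∀ c : Fin N, (c = h ∨ c = l) → r c = max (r h) (r l) → r c ≥ Δ c / 4 := by
  have e1 := hΔ h
  have e2 := hΔ l
  rw [if_neg hhO] at e1
  rw [if_pos hlO] at e2
  have a1 := hout h hhO
  have a2 := hin l hlO
  have c1 := abs_lt.mp (hconf h)
  have c2 := abs_lt.mp (hconf l)
  have c3 := hHigh h hhH l hlH
  have key : r h + r l > (Δ h + Δ l) / 2 := by linarith [c1.1, c1.2, c2.1, c2.2]
  refine ⟨key, ?_⟩
  intro c hc hm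
  have m1 := le_max_left (r h) (r l)
  have m2 := le_max_right (r h) (r l)
  rw [← hm] at m1 m2
  rcases hc with rfl | rfl <;> linarith
end

section
/- Suppose h ∈ OPT, l ∉ OPT, and μ̂_h − r_h < μ̂_l + r_l. Then r_h + r_l > (Δ_h + Δ_l)/4, and consequently any c ∈ {h, l} with r_c = max(r_h, r_l) satisfies r_c ≥ Δ_c/8. -/
/-- Suppose h ∈ OPT, l ∉ OPT, and μ̂_h − r_h < μ̂_l + r_l. Then
r_h + r_l > (Δ_h + Δ_l)/4, and consequently any c ∈ {h, l} with r_c = max(r_h, r_l)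
satisfies r_c ≥ Δ_c/8. -/
theorem stmt_9 {N K : ℕ} (hK1 : 1 ≤ K) (hKN : K < N)
    (μ : Fin N → ℝ) (OPT : Finset (Fin N)) (mK mK1 : ℝ)
    (hcard : OPT.card = K)
    (horder : mK1 < mK)
    (hin : ∀ i ∈ OPT, mK ≤ μ i)
    (hout : ∀ i ∉ OPT, μ i ≤ mK1)
    (hattK : ∃ i ∈ OPT, μ i = mK)
    (hattK1 : ∃ i ∉ OPT, μ i = mK1)
    (Δ : Fin N → ℝ)
    (hΔ : ∀ i, Δ i = if i ∈ OPT then μ i - mK1 else mK - μ i)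
    (μh r : Fin N → ℝ) (hr : ∀ i, 0 < r i) (hconf : ∀ i, |μh i - μ i| < r i)
    (High : Finset (Fin N)) (hHcard : High.card = K)
    (hHigh : ∀ i ∈ High, ∀ j ∉ High, μh j ≤ μh i)
    (h l : Fin N) (hhH : h ∈ High) (hlH : l ∉ High)
    (hhmin : ∀ i ∈ High, μh h - r h ≤ μh i - r i)
    (hlmax : ∀ i ∉ High, μh i + r i ≤ μh l + r l)
    (hhO : h ∈ OPT) (hlO : l ∉ OPT) (hnstop : μh h - r h < μh l + r l) :
    r h + r l > (Δ h + Δ l) / 4 ∧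
      ∀ c : Fin N, (c = h ∨ c = l) → r c = max (r h) (r l) → r c ≥ Δ c / 8 := by
  have h1 := hΔ h
  have h2 := hΔ l
  rw [if_pos hhO] at h1
  rw [if_neg hlO] at h2
  have h3 := abs_lt.mp (hconf h)
  have h4 := abs_lt.mp (hconf l)
  have h5 := hin h hhO
  have h6 := hout l hlO
  obtain ⟨h3a, h3b⟩ := h3
  obtain ⟨h4a, h4b⟩ := h4
  have key : r h + r l > (Δ h + Δ l) / 4 := by linarith
  refine ⟨key, ?_⟩
  intro c hc hm
  have h7 := le_max_left (r h) (r l)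
  have h8 := le_max_right (r h) (r l)
  rw [← hm] at h7 h8
  rcases hc with rfl | rfl <;> linarith
end

section
/- Suppose h ∈ OPT and l ∈ OPT. Then r_h > Δ_h/4. -/
/-- Suppose h ∈ OPT and l ∈ OPT. Then r_h > Δ_h/4. -/
theorem stmt_10 {N K : ℕ} (hK1 : 1 ≤ K) (hKN : K < N)
    (μ : Fin N → ℝ) (OPT : Finset (Fin N)) (mK mK1 : ℝ)
    (hcard : OPT.card = K)
    (horder : mK1 < mK)
    (hin : ∀ i ∈ OPT, mK ≤ μ i)
    (hout : ∀ i ∉ OPT, μ i ≤ mK1)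
    (hattK : ∃ i ∈ OPT, μ i = mK)
    (hattK1 : ∃ i ∉ OPT, μ i = mK1)
    (Δ : Fin N → ℝ)
    (hΔ : ∀ i, Δ i = if i ∈ OPT then μ i - mK1 else mK - μ i)
    (μh r : Fin N → ℝ) (hr : ∀ i, 0 < r i) (hconf : ∀ i, |μh i - μ i| < r i)
    (High : Finset (Fin N)) (hHcard : High.card = K)
    (hHigh : ∀ i ∈ High, ∀ j ∉ High, μh j ≤ μh i)
    (h l : Fin N) (hhH : h ∈ High) (hlH : l ∉ High)
    (hhmin : ∀ i ∈ High, μh h - r h ≤ μh i - r i)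
    (hlmax : ∀ i ∉ High, μh i + r i ≤ μh l + r l)
    (hhO : h ∈ OPT) (hlO : l ∈ OPT) :
    r h > Δ h / 4 := by
  have hj : ∃ j ∈ High, j ∉ OPT := by
    by_contra hc
    push Not at hc
    have hsub : High ⊆ OPT := fun j hj => hc j hj
    have heq : High = OPT := Finset.eq_of_subset_of_card_le hsub (by omega)
    exact hlH (heq ▸ hlO)
  obtain ⟨j, hjH, hjO⟩ := hj
  have h1 := hhmin j hjH
  have h2 := abs_lt.mp (hconf j)
  have h3 := abs_lt.mp (hconf h)
  have h4 := hout j hjO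
  have h5 := hΔ h
  rw [if_pos hhO] at h5
  have h6 := hr h
  linarith [h2.1, h2.2, h3.1, h3.2]
end

section
/- Suppose h ∈ OPT, l ∈ OPT, and r_l ≥ r_h. Then r_l > Δ_l/6. -/
/-- Suppose h ∈ OPT, l ∈ OPT, and r_l ≥ r_h. Then r_l > Δ_l/6. -/
theorem stmt_11 {N K : ℕ} (hK1 : 1 ≤ K) (hKN : K < N)
    (μ : Fin N → ℝ) (OPT : Finset (Fin N)) (mK mK1 : ℝ)
    (hcard : OPT.card = K)
    (horder : mK1 < mK)
    (hin : ∀ i ∈ OPT, mK ≤ μ i)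
    (hout : ∀ i ∉ OPT, μ i ≤ mK1)
    (hattK : ∃ i ∈ OPT, μ i = mK)
    (hattK1 : ∃ i ∉ OPT, μ i = mK1)
    (Δ : Fin N → ℝ)
    (hΔ : ∀ i, Δ i = if i ∈ OPT then μ i - mK1 else mK - μ i)
    (μh r : Fin N → ℝ) (hr : ∀ i, 0 < r i) (hconf : ∀ i, |μh i - μ i| < r i)
    (High : Finset (Fin N)) (hHcard : High.card = K)
    (hHigh : ∀ i ∈ High, ∀ j ∉ High, μh j ≤ μh i)
    (h l : Fin N) (hhH : h ∈ High) (hlH : l ∉ High)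
    (hhmin : ∀ i ∈ High, μh h - r h ≤ μh i - r i)
    (hlmax : ∀ i ∉ High, μh i + r i ≤ μh l + r l)
    (hhO : h ∈ OPT) (hlO : l ∈ OPT) (hrl : r h ≤ r l) :
    r l > Δ l / 6 := by
  have hx : ∃ x ∈ High, x ∉ OPT := by
    by_contra hc
    push Not at hc
    have hsub : High ⊆ OPT := fun x hx => hc x hx
    have heq := Finset.eq_of_subset_of_card_le hsub (by omega)
    rw [heq] at hlH
    exact hlH hlO
  obtain ⟨x, hxH, hxO⟩ := hx
  have h1 := hhmin x hxH
  have h2 := abs_lt.mp (hconf x)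
  have h3 := hout x hxO
  have h4 := hHigh h hhH l hlH
  have h5 := abs_lt.mp (hconf l)
  have h6 := hr l
  have h7 := hΔ l
  rw [if_pos hlO] at h7
  linarith [h2.1, h2.2, h5.1, h5.2]
end

section
/- Suppose e ∈ M △ M̃ and u_e ≥ u_a for every a ∈ M △ M̃ (so e is the arm sampled by lil'CLUCB). Then u_e ≥ Δ_e/4. -/
theorem exch_aux {N : ℕ} (A B : Finset (Fin N)) (h : A.card = B.card) (x : Fin N)
    (hx : x ∈ A) (hx' : x ∉ B) : ∃ j, j ∈ B ∧ j ∉ A := by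
  by_contra hc
  push Not at hc
  have hs : B ⊆ A := fun j hj => hc j hj
  have := Finset.eq_of_subset_of_card_le hs h.le
  exact hx' (this ▸ hx)

/-- Suppose e ∈ M △ M̃ and u_e ≥ u_a for every a ∈ M △ M̃ (so e is the arm
sampled by lil'CLUCB). Then u_e ≥ Δ_e/4. -/
theorem stmt_14 {N K : ℕ} (hK1 : 1 ≤ K) (hKN : K < N)
    (μ : Fin N → ℝ) (OPT : Finset (Fin N)) (mK mK1 : ℝ)
    (hcard : OPT.card = K)
    (horder : mK1 < mK)
    (hin : ∀ i ∈ OPT, mK ≤ μ i)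
    (hout : ∀ i ∉ OPT, μ i ≤ mK1)
    (hattK : ∃ i ∈ OPT, μ i = mK)
    (hattK1 : ∃ i ∉ OPT, μ i = mK1)
    (Δ : Fin N → ℝ)
    (hΔ : ∀ i, Δ i = if i ∈ OPT then μ i - mK1 else mK - μ i)
    (μh u : Fin N → ℝ) (hu : ∀ i, 0 < u i) (hconf : ∀ i, |μh i - μ i| < u i)
    (M Mt : Finset (Fin N)) (hMcard : M.card = K) (hMtcard : Mt.card = K)
    (hMtop : ∀ i ∈ M, ∀ j ∉ M, μh j ≤ μh i)
    (μt : Fin N → ℝ)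
    (hμt : ∀ i, μt i = if i ∈ M then μh i - u i else μh i + u i)
    (hMttop : ∀ i ∈ Mt, ∀ j ∉ Mt, μt j ≤ μt i)
    (e : Fin N) (he : e ∈ (M \ Mt) ∪ (Mt \ M))
    (hmax : ∀ a ∈ (M \ Mt) ∪ (Mt \ M), u a ≤ u e) :
    u e ≥ Δ e / 4 := by
  by_contra hlt
  push Not at hlt
  have hc1 : ∀ i, μ i - u i < μh i := fun i => by have := (abs_lt.mp (hconf i)).1; linarith
  have hc2 : ∀ i, μh i < μ i + u i := fun i => by have := (abs_lt.mp (hconf i)).2; linarith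
  have hD1 : ∀ a, a ∈ M → a ∉ Mt → u a ≤ u e := fun a h1 h2 => hmax a (by simp [h1, h2])
  have hD2 : ∀ a, a ∈ Mt → a ∉ M → u a ≤ u e := fun a h1 h2 => hmax a (by simp [h1, h2])
  have ht1 : ∀ i, i ∈ M → μt i = μh i - u i := fun i h => by rw [hμt, if_pos h]
  have ht2 : ∀ i, i ∉ M → μt i = μh i + u i := fun i h => by rw [hμt, if_neg h]
  have e1 := hc1 e
  have e2 := hc2 e
  have e0 := hu e
  have he' : (e ∈ M ∧ e ∉ Mt) ∨ (e ∈ Mt ∧ e ∉ M) := by simpa using he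
  by_cases ho : e ∈ OPT
  · rw [hΔ, if_pos ho] at hlt
    rcases he' with ⟨hm, hn⟩ | ⟨hn, hm⟩
    · obtain ⟨j, hj, hjo⟩ := exch_aux OPT Mt (by omega) e ho hn
      have a1 := hMttop j hj e hn
      have a2 := ht1 e hm
      have a3 := hout j hjo
      have a4 := hc2 j
      by_cases hjm : j ∈ M
      · have := ht1 j hjm
        linarith
      · have := ht2 j hjm
        have := hD2 j hj hjm
        linarith
    · obtain ⟨j, hj, hjo⟩ := exch_aux OPT M (by omega) e ho hm
      obtain ⟨a, ha, ha'⟩ := exch_aux Mt M (by omega) e hn hm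
      have a1 := hMtop j hj e hm
      have a3 := hout j hjo
      have a4 := hc2 j
      have a5 := hMtop a ha e hm
      have a6 := hD1 a ha ha'
      have a7 := ht1 a ha
      by_cases hjm : j ∈ Mt
      · have := ht1 j hj
        have := hMttop j hjm a ha'
        linarith
      · have := hD1 j hj hjm
        linarith
  · rw [hΔ, if_neg ho] at hlt
    rcases he' with ⟨hm, hn⟩ | ⟨hn, hm⟩
    · obtain ⟨j, hj, hjo⟩ := exch_aux M OPT (by omega) e hm ho
      obtain ⟨a, ha, ha'⟩ := exch_aux M Mt (by omega) e hm hn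
      have a1 := hMtop e hm j hjo
      have a3 := hin j hj
      have a4 := hc1 j
      have a5 := hMtop e hm a ha'
      have a6 := hD2 a ha ha'
      have a7 := ht2 a ha'
      by_cases hjm : j ∈ Mt
      · have := hD2 j hjm hjo
        linarith
      · have := ht2 j hjo
        have := hMttop a ha j hjm
        linarith
    · obtain ⟨j, hj, hjo⟩ := exch_aux Mt OPT (by omega) e hn ho
      have a1 := hMttop e hn j hjo
      have a2 := ht2 e hm
      have a3 := hin j hj
      have a4 := hc1 j
      by_cases hjm : j ∈ M
      · have := ht1 j hjm
        have := hD1 j hjm hjo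
        linarith
      · have := ht2 j hjm
        linarith
end

section
/- Suppose e ∈ OPT, e ∈ M \ M̃, and u_e ≥ u_a for every a ∈ M △ M̃. Then u_e ≥ Δ_e/4. -/
/-- Suppose e ∈ OPT, e ∈ M \ M̃, and u_e ≥ u_a for every a ∈ M △ M̃.
Then u_e ≥ Δ_e/4. -/
theorem stmt_15 {N K : ℕ} (hK1 : 1 ≤ K) (hKN : K < N)
    (μ : Fin N → ℝ) (OPT : Finset (Fin N)) (mK mK1 : ℝ)
    (hcard : OPT.card = K)
    (horder : mK1 < mK)
    (hin : ∀ i ∈ OPT, mK ≤ μ i)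
    (hout : ∀ i ∉ OPT, μ i ≤ mK1)
    (hattK : ∃ i ∈ OPT, μ i = mK)
    (hattK1 : ∃ i ∉ OPT, μ i = mK1)
    (Δ : Fin N → ℝ)
    (hΔ : ∀ i, Δ i = if i ∈ OPT then μ i - mK1 else mK - μ i)
    (μh u : Fin N → ℝ) (hu : ∀ i, 0 < u i) (hconf : ∀ i, |μh i - μ i| < u i)
    (M Mt : Finset (Fin N)) (hMcard : M.card = K) (hMtcard : Mt.card = K)
    (hMtop : ∀ i ∈ M, ∀ j ∉ M, μh j ≤ μh i)
    (μt : Fin N → ℝ)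
    (hμt : ∀ i, μt i = if i ∈ M then μh i - u i else μh i + u i)
    (hMttop : ∀ i ∈ Mt, ∀ j ∉ Mt, μt j ≤ μt i)
    (e : Fin N) (heO : e ∈ OPT) (he : e ∈ M \ Mt)
    (hmax : ∀ a ∈ (M \ Mt) ∪ (Mt \ M), u a ≤ u e) :
    u e ≥ Δ e / 4 := by
  obtain ⟨heM, heMt⟩ := Finset.mem_sdiff.mp he
  have hj : ∃ j ∈ Mt, j ∉ OPT := by
    by_contra! h
    have hEq : Mt = OPT := Finset.eq_of_subset_of_card_le h (by omega)
    exact heMt (hEq ▸ heO)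
  obtain ⟨j, hjMt, hjO⟩ := hj
  have h1 := hMttop j hjMt e heMt
  have h2 := abs_lt.mp (hconf e)
  have h3 := abs_lt.mp (hconf j)
  have h4 := hout j hjO
  have h5 := hu e
  rw [hμt e, hμt j, if_pos heM] at h1
  rw [hΔ e, if_pos heO]
  by_cases hjM : j ∈ M
  · rw [if_pos hjM] at h1
    linarith [h2.1, h3.2]
  · rw [if_neg hjM] at h1
    have h6 := hmax j (Finset.mem_union_right _ (Finset.mem_sdiff.mpr ⟨hjMt, hjM⟩))
    linarith [h2.1, h3.2]
end

section
/- Suppose e ∈ OPT, e ∈ M̃ \ M, and u_e ≥ u_a for every a ∈ M △ M̃. Then u_e ≥ Δ_e/4. -/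
/-- Suppose e ∈ OPT, e ∈ M̃ \ M, and u_e ≥ u_a for every a ∈ M △ M̃.
Then u_e ≥ Δ_e/4. -/
theorem stmt_16 {N K : ℕ} (hK1 : 1 ≤ K) (hKN : K < N)
    (μ : Fin N → ℝ) (OPT : Finset (Fin N)) (mK mK1 : ℝ)
    (hcard : OPT.card = K)
    (horder : mK1 < mK)
    (hin : ∀ i ∈ OPT, mK ≤ μ i)
    (hout : ∀ i ∉ OPT, μ i ≤ mK1)
    (hattK : ∃ i ∈ OPT, μ i = mK)
    (hattK1 : ∃ i ∉ OPT, μ i = mK1)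
    (Δ : Fin N → ℝ)
    (hΔ : ∀ i, Δ i = if i ∈ OPT then μ i - mK1 else mK - μ i)
    (μh u : Fin N → ℝ) (hu : ∀ i, 0 < u i) (hconf : ∀ i, |μh i - μ i| < u i)
    (M Mt : Finset (Fin N)) (hMcard : M.card = K) (hMtcard : Mt.card = K)
    (hMtop : ∀ i ∈ M, ∀ j ∉ M, μh j ≤ μh i)
    (μt : Fin N → ℝ)
    (hμt : ∀ i, μt i = if i ∈ M then μh i - u i else μh i + u i)
    (hMttop : ∀ i ∈ Mt, ∀ j ∉ Mt, μt j ≤ μt i)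
    (e : Fin N) (heO : e ∈ OPT) (he : e ∈ Mt \ M)
    (hmax : ∀ a ∈ (M \ Mt) ∪ (Mt \ M), u a ≤ u e) :
    u e ≥ Δ e / 4 := by
  have key : ∀ A B : Finset (Fin N), A.card = B.card → e ∈ B → e ∉ A → ∃ a ∈ A, a ∉ B := by
    intro A B hc hB hA
    by_contra! h
    have hAB : A = B := Finset.eq_of_subset_of_card_le h hc.ge
    exact hA (hAB ▸ hB)
  obtain ⟨heMt, heM⟩ := Finset.mem_sdiff.mp he
  obtain ⟨a, haM, haO⟩ := key M OPT (by omega) heO heM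
  obtain ⟨f, hfM, hfMt⟩ := key M Mt (by omega) heMt heM
  by_contra hlt
  have hD := hΔ e
  rw [if_pos heO] at hD
  have ce := abs_lt.mp (hconf e)
  have ca := abs_lt.mp (hconf a)
  have ha := hout a haO
  have hae := hMtop a haM e heM
  have hfe := hMtop f hfM e heM
  have hue := hu e
  have huf := hmax f (by simp [hfM, hfMt])
  have haMt : a ∈ Mt := by
    by_contra h
    have := hmax a (by simp [haM, h])
    linarith [ce.1, ce.2, ca.1, ca.2]
  have h1 := hMttop a haMt f hfMt
  rw [hμt, hμt, if_pos haM, if_pos hfM] at h1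
  linarith [ce.1, ce.2, ca.1, ca.2]
end

section
/- Suppose e ∉ OPT, e ∈ M \ M̃, and u_e ≥ u_a for every a ∈ M △ M̃. Then u_e ≥ Δ_e/4. -/
/-- Suppose e ∉ OPT, e ∈ M \ M̃, and u_e ≥ u_a for every a ∈ M △ M̃.
Then u_e ≥ Δ_e/4. -/
theorem stmt_17 {N K : ℕ} (hK1 : 1 ≤ K) (hKN : K < N)
    (μ : Fin N → ℝ) (OPT : Finset (Fin N)) (mK mK1 : ℝ)
    (hcard : OPT.card = K)
    (horder : mK1 < mK)
    (hin : ∀ i ∈ OPT, mK ≤ μ i)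
    (hout : ∀ i ∉ OPT, μ i ≤ mK1)
    (hattK : ∃ i ∈ OPT, μ i = mK)
    (hattK1 : ∃ i ∉ OPT, μ i = mK1)
    (Δ : Fin N → ℝ)
    (hΔ : ∀ i, Δ i = if i ∈ OPT then μ i - mK1 else mK - μ i)
    (μh u : Fin N → ℝ) (hu : ∀ i, 0 < u i) (hconf : ∀ i, |μh i - μ i| < u i)
    (M Mt : Finset (Fin N)) (hMcard : M.card = K) (hMtcard : Mt.card = K)
    (hMtop : ∀ i ∈ M, ∀ j ∉ M, μh j ≤ μh i)
    (μt : Fin N → ℝ)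
    (hμt : ∀ i, μt i = if i ∈ M then μh i - u i else μh i + u i)
    (hMttop : ∀ i ∈ Mt, ∀ j ∉ Mt, μt j ≤ μt i)
    (e : Fin N) (heO : e ∉ OPT) (he : e ∈ M \ Mt)
    (hmax : ∀ a ∈ (M \ Mt) ∪ (Mt \ M), u a ≤ u e) :
    u e ≥ Δ e / 4 := by
  have he1 := (Finset.mem_sdiff.mp he).1
  have he2 := (Finset.mem_sdiff.mp he).2
  rw [hΔ e, if_neg heO]
  by_contra hlt
  have hue := hu e
  have hce := abs_lt.mp (hconf e)
  have ha : ∃ a ∈ OPT, a ∉ M := by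
    by_contra h
    push Not at h
    have hEq : OPT = M := Finset.eq_of_subset_of_card_le h (by omega)
    exact heO (hEq ▸ he1)
  have hb : ∃ b ∈ Mt, b ∉ M := by
    by_contra h
    push Not at h
    have hEq : Mt = M := Finset.eq_of_subset_of_card_le h (by omega)
    exact he2 (hEq ▸ he1)
  have key : ∀ b ∈ Mt, b ∉ M → μh b + u b < mK := by
    intro b hbt hbM
    have h1 := hMtop e he1 b hbM
    have h2 := hmax b (Finset.mem_union_right _ (Finset.mem_sdiff.mpr ⟨hbt, hbM⟩))
    linarith [hce.2]
  obtain ⟨a, haO, haM⟩ := ha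
  obtain ⟨b, hbt, hbM⟩ := hb
  have hca := abs_lt.mp (hconf a)
  have hma := hin a haO
  by_cases hat : a ∈ Mt
  · linarith [key a hat haM, hca.1]
  · have h1 := hMttop b hbt a hat
    rw [hμt a, hμt b, if_neg haM, if_neg hbM] at h1
    linarith [key b hbt hbM, hca.1]
end

section
/- Suppose e ∉ OPT, e ∈ M̃ \ M, and u_e ≥ u_a for every a ∈ M △ M̃. Then u_e ≥ Δ_e/4. -/
/-- Suppose e ∉ OPT, e ∈ M̃ \ M, and u_e ≥ u_a for every a ∈ M △ M̃.
Then u_e ≥ Δ_e/4. -/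
theorem stmt_18 {N K : ℕ} (hK1 : 1 ≤ K) (hKN : K < N)
    (μ : Fin N → ℝ) (OPT : Finset (Fin N)) (mK mK1 : ℝ)
    (hcard : OPT.card = K)
    (horder : mK1 < mK)
    (hin : ∀ i ∈ OPT, mK ≤ μ i)
    (hout : ∀ i ∉ OPT, μ i ≤ mK1)
    (hattK : ∃ i ∈ OPT, μ i = mK)
    (hattK1 : ∃ i ∉ OPT, μ i = mK1)
    (Δ : Fin N → ℝ)
    (hΔ : ∀ i, Δ i = if i ∈ OPT then μ i - mK1 else mK - μ i)
    (μh u : Fin N → ℝ) (hu : ∀ i, 0 < u i) (hconf : ∀ i, |μh i - μ i| < u i)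
    (M Mt : Finset (Fin N)) (hMcard : M.card = K) (hMtcard : Mt.card = K)
    (hMtop : ∀ i ∈ M, ∀ j ∉ M, μh j ≤ μh i)
    (μt : Fin N → ℝ)
    (hμt : ∀ i, μt i = if i ∈ M then μh i - u i else μh i + u i)
    (hMttop : ∀ i ∈ Mt, ∀ j ∉ Mt, μt j ≤ μt i)
    (e : Fin N) (heO : e ∉ OPT) (he : e ∈ Mt \ M)
    (hmax : ∀ a ∈ (M \ Mt) ∪ (Mt \ M), u a ≤ u e) :
    u e ≥ Δ e / 4 := by
  have heMt : e ∈ Mt := (Finset.mem_sdiff.1 he).1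
  have heM : e ∉ M := (Finset.mem_sdiff.1 he).2
  obtain ⟨o, hoO, hoMt⟩ : ∃ o ∈ OPT, o ∉ Mt := by
    by_contra! h
    have heq : OPT = Mt := Finset.eq_of_subset_of_card_le h (by omega)
    exact heO (heq ▸ heMt)
  have h1 := hMttop e heMt o hoMt
  have h2 := hin o hoO
  have h3 := abs_lt.1 (hconf e)
  have h4 := abs_lt.1 (hconf o)
  have h5 := hu e
  rw [hμt o, hμt e, if_neg heM] at h1
  rw [hΔ e, if_neg heO]
  by_cases hoM : o ∈ M
  · have h6 := hmax o (Finset.mem_union_left _ (Finset.mem_sdiff.2 ⟨hoM, hoMt⟩))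
    rw [if_pos hoM] at h1
    linarith [h3.1, h3.2, h4.1, h4.2]
  · rw [if_neg hoM] at h1
    linarith [h3.1, h3.2, h4.1, h4.2]
end

section
/- For every constant C₁ > 0 there exists a constant C₂ > 0 such that for all integers N ≥ 2, all reals δ ∈ (0,1), Δ ∈ (0,1), and all reals T ≥ 3: if (1/T)·log(N·log(T)/δ) ≥ C₁²·Δ², then T ≤ (C₂/Δ²)·log(N·log(N/(Δ²·δ))/δ). -/
set_option maxHeartbeats 1000000 in
/-- For every constant C₁ > 0 there exists a constant C₂ > 0 such that for all
integers N ≥ 2, all reals δ ∈ (0,1), Δ ∈ (0,1), and all reals T ≥ 3: if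
(1/T)·log(N·log(T)/δ) ≥ C₁²·Δ², then T ≤ (C₂/Δ²)·log(N·log(N/(Δ²·δ))/δ). -/
theorem stmt_19 :
    ∀ C₁ : ℝ, 0 < C₁ → ∃ C₂ : ℝ, 0 < C₂ ∧
      ∀ (N : ℕ), 2 ≤ N → ∀ δ Δ T : ℝ, 0 < δ → δ < 1 → 0 < Δ → Δ < 1 → 3 ≤ T →
        (1 / T) * Real.log ((N : ℝ) * Real.log T / δ) ≥ C₁ ^ 2 * Δ ^ 2 →
        T ≤ (C₂ / Δ ^ 2) * Real.log ((N : ℝ) * Real.log ((N : ℝ) / (Δ ^ 2 * δ)) / δ) := by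
  intro C hC
  obtain ⟨c, hc⟩ : ∃ c, c = C ^ 2 := ⟨_, rfl⟩
  have hc0 : 0 < c := by rw [hc]; positivity
  have hl2 : 0 < Real.log 2 := Real.log_pos (by norm_num)
  obtain ⟨m, hm⟩ : ∃ m, m = Real.log (2 * Real.log 2) := ⟨_, rfl⟩
  have hm0 : 0 < m := by
    rw [hm]; apply Real.log_pos; linarith [Real.log_two_gt_d9]
  obtain ⟨K, hK⟩ : ∃ K, K = 2 + |Real.log (4 / c ^ 2)| / Real.log 2 := ⟨_, rfl⟩
  have hK2 : 2 ≤ K := by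
    rw [hK]; linarith [div_nonneg (abs_nonneg (Real.log (4 / c ^ 2))) hl2.le]
  have hlK : 0 < Real.log K := Real.log_pos (by linarith)
  refine ⟨(1 + Real.log K / m) / c, by positivity, ?_⟩
  intro N hN δ Δ T hδ hδ1 hΔ hΔ1 hT h
  have hN' : (2 : ℝ) ≤ N := by exact_mod_cast hN
  obtain ⟨D, hD⟩ : ∃ D, D = Δ ^ 2 := ⟨_, rfl⟩
  obtain ⟨A, hA⟩ : ∃ A, A = (N : ℝ) / δ := ⟨_, rfl⟩
  have hD0 : 0 < D := by rw [hD]; positivity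
  have hD1 : D ≤ 1 := by rw [hD]; nlinarith
  have hA2 : 2 ≤ A := by rw [hA, le_div_iff₀ hδ]; nlinarith
  have e1 : (N : ℝ) * Real.log T / δ = A * Real.log T := by rw [hA]; ring
  have e2 : (N : ℝ) / (Δ ^ 2 * δ) = A / D := by rw [hA, hD]; field_simp
  have e3 : (N : ℝ) * Real.log (A / D) / δ = A * Real.log (A / D) := by
    rw [hA]; ring
  rw [e2, e3, ← hD]
  rw [e1, ← hD, ← hc] at h
  have hT0 : 0 < T := by linarith
  have hlT : 0 < Real.log T := Real.log_pos (by linarith)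
  have h1 : c * D * T ≤ Real.log (A * Real.log T) := by
    have := mul_le_mul_of_nonneg_right h hT0.le
    have e : 1 / T * Real.log (A * Real.log T) * T = Real.log (A * Real.log T) := by
      field_simp
    linarith
  obtain ⟨X, hX⟩ : ∃ X, X = A / D := ⟨_, rfl⟩
  rw [← hX]
  have hXA : A ≤ X := by rw [hX, le_div_iff₀ hD0]; nlinarith
  have hX2 : 2 ≤ X := by linarith
  have hL : Real.log 2 ≤ Real.log X := Real.log_le_log (by norm_num) hX2
  have hL0 : 0 < Real.log X := by linarith
  -- crude bound
  have h2 : c * D * T ≤ 2 * Real.sqrt (A * T) := by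
    have a1 : Real.log (A * Real.log T) ≤ Real.log (A * T) := by
      apply Real.log_le_log (by positivity)
      have := Real.log_le_sub_one_of_pos hT0
      nlinarith
    have hp : 0 < A * T := by positivity
    have a2 := Real.log_le_sub_one_of_pos (Real.sqrt_pos.mpr hp)
    rw [Real.log_sqrt hp.le] at a2
    linarith
  have h3 : T ≤ 4 / c ^ 2 * X ^ 2 := by
    have hp : 0 < A * T := by positivity
    have s := Real.sq_sqrt hp.le
    have b : (c * D * T) ^ 2 ≤ 4 * (A * T) := by
      have := pow_le_pow_left₀ (by positivity) h2 2
      rw [mul_pow 2, s] at this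
      linarith
    have b2 : c ^ 2 * D ^ 2 * T ≤ 4 * A := by
      by_contra hh
      push Not at hh
      have := mul_lt_mul_of_pos_right hh hT0
      have q : (c * D * T) ^ 2 = c ^ 2 * D ^ 2 * T * T := by ring
      linarith
    have b3 : c ^ 2 * D ^ 2 * T ≤ 4 * A ^ 2 := by
      have q : A * 1 ≤ A * A := mul_le_mul_of_nonneg_left (by linarith) (by linarith)
      rw [sq A]
      linarith
    have e : 4 / c ^ 2 * X ^ 2 = 4 * A ^ 2 / (c ^ 2 * D ^ 2) := by
      rw [hX]; field_simp
    rw [e, le_div_iff₀ (by positivity)]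
    linarith
  have h4 : Real.log T ≤ K * Real.log X := by
    have a := Real.log_le_log hT0 h3
    rw [Real.log_mul (by positivity) (by positivity), Real.log_pow] at a
    have b := le_abs_self (Real.log (4 / c ^ 2))
    have d : |Real.log (4 / c ^ 2)| ≤ |Real.log (4 / c ^ 2)| / Real.log 2 * Real.log X := by
      rw [div_mul_eq_mul_div, le_div_iff₀ hl2]
      exact mul_le_mul_of_nonneg_left hL (abs_nonneg _)
    push_cast at a
    rw [hK, add_mul]
    linarith
  have h5 : Real.log (A * Real.log T) ≤ Real.log K + Real.log (A * Real.log X) := by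
    rw [← Real.log_mul (by positivity) (by positivity)]
    apply Real.log_le_log (by positivity)
    have := mul_le_mul_of_nonneg_left h4 (by linarith : 0 ≤ A)
    linarith
  have h6 : m ≤ Real.log (A * Real.log X) := by
    rw [hm]
    apply Real.log_le_log (by positivity)
    exact mul_le_mul hA2 hL hl2.le (by linarith)
  have h7 : Real.log K ≤ Real.log K / m * Real.log (A * Real.log X) := by
    rw [div_mul_eq_mul_div, le_div_iff₀ hm0]
    exact mul_le_mul_of_nonneg_left h6 hlK.le
  have e : (1 + Real.log K / m) / c / D * Real.log (A * Real.log X)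
      = (1 + Real.log K / m) * Real.log (A * Real.log X) / (c * D) := by
    rw [div_div]; ring
  rw [e, le_div_iff₀ (by positivity), add_mul]
  linarith
end
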